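/- Suppose the Assumptions hold, d₁ = d₂, and (r,s) is a red arrow with ⟨r,s⟩ = ⟨a,d₁⟩. Then either (c) r ∈ {x(a)}×(y(a),∞) and s ∈ (x(a),x(d₁)]×{y(a)}, or (d) r ∈ (−∞,x(a))×{y(a)} and s ∈ {x(a)}×[y(d₁),y(a)). Moreover, the open axis-parallel segment with endpoints a and r contains no point of X, and the open axis-parallel segment with endpoints a and s contains no point of X. -/

import Mathlib

noncomputable section
open Classical

/-- The L1 (Manhattan) metric on ℝ². -/
def rho (u v : ℝ × ℝ) : ℝ := |u.1 - v.1| + |u.2 - v.2|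

/-- `z` is between `u` and `v` (w.r.t. the L1 metric): the three points are
pairwise distinct and `ρ(u,v) = ρ(u,z) + ρ(z,v)`. -/
def MBtw (u z v : ℝ × ℝ) : Prop :=
  u ≠ z ∧ z ≠ v ∧ u ≠ v ∧ rho u v = rho u z + rho z v

/-- The line of `X` induced by distinct points `u, v`. -/
def lineThrough (X : Finset (ℝ × ℝ)) (u v : ℝ × ℝ) : Finset (ℝ × ℝ) :=
  X.filter fun z => z = u ∨ z = v ∨ MBtw u z v ∨ MBtw z u v ∨ MBtw u v z

/-- `X` is non-collinear: no line induced by two distinct points of `X` equals `X`. -/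
def NonCollinear (X : Finset (ℝ × ℝ)) : Prop :=
  ∀ u ∈ X, ∀ v ∈ X, u ≠ v → lineThrough X u v ≠ X

/-- `{p,q}` is an increasing pair. -/
def IncPair (p q : ℝ × ℝ) : Prop := 0 < (q.1 - p.1) * (q.2 - p.2)

/-- `{p,q}` is a decreasing pair. -/
def DecPair (p q : ℝ × ℝ) : Prop := (q.1 - p.1) * (q.2 - p.2) < 0

/-- The partial order `≤_I`. -/
def leI (c d : ℝ × ℝ) : Prop := c.1 ≤ d.1 ∧ c.2 ≤ d.2

/-- `c <_I d`. -/
def ltI (c d : ℝ × ℝ) : Prop := leI c d ∧ c ≠ d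

/-- The partial order `≤_D`. -/
def leD (c d : ℝ × ℝ) : Prop := c.1 ≤ d.1 ∧ d.2 ≤ c.2

/-- `c <_D d`. -/
def ltD (c d : ℝ × ℝ) : Prop := leD c d ∧ c ≠ d

/-- `(p,q)` is a blue arrow of `X`. -/
def BlueArrow (X : Finset (ℝ × ℝ)) (p q : ℝ × ℝ) : Prop :=
  p ∈ X ∧ q ∈ X ∧ IncPair p q ∧ ltI p q ∧
  ∀ a b, a ∈ X → b ∈ X → IncPair a b → ltI a b →
    lineThrough X a b = lineThrough X p q → (ltI q b ∨ (q = b ∧ leI a p))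

/-- `(p,q)` is a red arrow of `X`. -/
def RedArrow (X : Finset (ℝ × ℝ)) (p q : ℝ × ℝ) : Prop :=
  p ∈ X ∧ q ∈ X ∧ DecPair p q ∧ ltD p q ∧
  ∀ a b, a ∈ X → b ∈ X → DecPair a b → ltD a b →
    lineThrough X a b = lineThrough X p q → (ltD q b ∨ (q = b ∧ leD a p))

/-- An arrow is a blue or a red arrow. -/
def Arrow (X : Finset (ℝ × ℝ)) (p q : ℝ × ℝ) : Prop :=
  BlueArrow X p q ∨ RedArrow X p q

/-- `a` is not an endpoint of any arrow of `X`. -/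
def NotEndpoint (X : Finset (ℝ × ℝ)) (a : ℝ × ℝ) : Prop :=
  ∀ p q, Arrow X p q → a ≠ p ∧ a ≠ q

/-- Option (a): `t ∈ (x(a),x(d))×{y(a)}` and `w = d`. -/
def PlacementA (a d t w : ℝ × ℝ) : Prop :=
  (a.1 < t.1 ∧ t.1 < d.1 ∧ t.2 = a.2) ∧ w = d

/-- Option (b): `t ∈ {x(a)}×(y(d),y(a))` and `w = d`. -/
def PlacementB (a d t w : ℝ × ℝ) : Prop :=
  (t.1 = a.1 ∧ d.2 < t.2 ∧ t.2 < a.2) ∧ w = d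

/-- Option (c): `t ∈ {x(a)}×(y(a),∞)` and `w ∈ (x(a),x(d)]×{y(a)}`. -/
def PlacementC (a d t w : ℝ × ℝ) : Prop :=
  (t.1 = a.1 ∧ a.2 < t.2) ∧ (a.1 < w.1 ∧ w.1 ≤ d.1 ∧ w.2 = a.2)

/-- Option (d): `t ∈ (−∞,x(a))×{y(a)}` and `w ∈ {x(a)}×[y(d),y(a))`. -/
def PlacementD (a d t w : ℝ × ℝ) : Prop :=
  (t.2 = a.2 ∧ t.1 < a.1) ∧ (w.1 = a.1 ∧ d.2 ≤ w.2 ∧ w.2 < a.2)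

/-- The four placement options of Lemma 2 (placement). -/
def Placement (a d t w : ℝ × ℝ) : Fin 4 → Prop
  | 0 => PlacementA a d t w
  | 1 => PlacementB a d t w
  | 2 => PlacementC a d t w
  | 3 => PlacementD a d t w

/-- The open axis-parallel segment with endpoints `u` and `v` (for `u, v`
sharing a coordinate): the points strictly between them on the common
horizontal or vertical line. -/
def OpenSeg (u v : ℝ × ℝ) : Set (ℝ × ℝ) :=
  {z | (z.1 = u.1 ∧ u.1 = v.1 ∧ min u.2 v.2 < z.2 ∧ z.2 < max u.2 v.2) ∨
       (z.2 = u.2 ∧ u.2 = v.2 ∧ min u.1 v.1 < z.1 ∧ z.1 < max u.1 v.1)}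

lemma rho_add_aux {p q r : ℝ} (h : (p ≤ q ∧ q ≤ r) ∨ (r ≤ q ∧ q ≤ p)) :
    |p - r| = |p - q| + |q - r| := by
  rcases h with h | h
  · rw [abs_of_nonpos, abs_of_nonpos, abs_of_nonpos] <;> linarith
  · rw [abs_of_nonneg, abs_of_nonneg, abs_of_nonneg] <;> linarith

lemma between_aux {p q r p' q' r' : ℝ}
    (h : |p - r| + |p' - r'| = |p - q| + |q - r| + (|p' - q'| + |q' - r'|)) :
    (p ≤ q ∧ q ≤ r) ∨ (r ≤ q ∧ q ≤ p) := by
  have h1 := abs_sub_le p q r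
  have h2 := abs_sub_le p' q' r'
  have h3 : |p - r| = |p - q| + |q - r| := by linarith
  clear h h1 h2
  grind

lemma rho_btw (u z v : ℝ × ℝ) : rho u v = rho u z + rho z v ↔
    ((u.1 ≤ z.1 ∧ z.1 ≤ v.1) ∨ (v.1 ≤ z.1 ∧ z.1 ≤ u.1)) ∧
    ((u.2 ≤ z.2 ∧ z.2 ≤ v.2) ∨ (v.2 ≤ z.2 ∧ z.2 ≤ u.2)) := by
  unfold rho
  constructor
  · intro h
    exact ⟨between_aux (p' := u.2) (q' := z.2) (r' := v.2) (by linarith),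
      between_aux (p' := u.1) (q' := z.1) (r' := v.1) (by linarith)⟩
  · rintro ⟨h1, h2⟩
    rw [rho_add_aux h1, rho_add_aux h2]; ring

lemma mem_line (X : Finset (ℝ × ℝ)) (u v z : ℝ × ℝ) (huv : u ≠ v) :
    z ∈ lineThrough X u v ↔ z ∈ X ∧ (rho u v = rho u z + rho z v ∨
      rho z v = rho z u + rho u v ∨ rho u z = rho u v + rho v z) := by
  unfold lineThrough
  rw [Finset.mem_filter]
  unfold MBtw
  refine and_congr_right fun _ => ?_
  by_cases h1 : z = u
  · subst h1; simp [rho]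
  by_cases h2 : z = v
  · subst h2; simp [rho]
  have h3 : u ≠ z := fun h => h1 h.symm
  have h4 : v ≠ z := fun h => h2 h.symm
  tauto

lemma mem_line_dec (X : Finset (ℝ × ℝ)) (u v z : ℝ × ℝ) (h1 : u.1 < v.1) (h2 : v.2 < u.2) :
    z ∈ lineThrough X u v ↔ z ∈ X ∧ ((z.1 ≤ u.1 ∧ u.2 ≤ z.2) ∨
      (u.1 ≤ z.1 ∧ z.2 ≤ u.2 ∧ z.1 ≤ v.1 ∧ v.2 ≤ z.2) ∨ (v.1 ≤ z.1 ∧ z.2 ≤ v.2)) := by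
  have huv : u ≠ v := by rintro rfl; exact lt_irrefl _ h1
  rw [mem_line X u v z huv, rho_btw, rho_btw, rho_btw]
  refine and_congr_right fun _ => ?_
  grind

lemma line_eq_hor (X : Finset (ℝ × ℝ)) (u v : ℝ × ℝ) (h1 : u.1 < v.1) (h2 : u.2 = v.2)
    (h : ∀ z ∈ X, u.1 < z.1 → z.1 < v.1 → z.2 = u.2) : lineThrough X u v = X := by
  have huv : u ≠ v := by rintro rfl; exact lt_irrefl _ h1
  ext z
  rw [mem_line X u v z huv, rho_btw, rho_btw, rho_btw]
  refine ⟨fun h => h.1, fun hz => ⟨hz, ?_⟩⟩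
  have := h z hz
  grind

lemma line_eq_ver (X : Finset (ℝ × ℝ)) (u v : ℝ × ℝ) (h1 : v.2 < u.2) (h2 : u.1 = v.1)
    (h : ∀ z ∈ X, v.2 < z.2 → z.2 < u.2 → z.1 = u.1) : lineThrough X u v = X := by
  have huv : u ≠ v := by rintro rfl; exact lt_irrefl _ h1
  ext z
  rw [mem_line X u v z huv, rho_btw, rho_btw, rho_btw]
  refine ⟨fun h => h.1, fun hz => ⟨hz, ?_⟩⟩
  have := h z hz
  grind

lemma red_spec {X : Finset (ℝ × ℝ)} {r s : ℝ × ℝ} (h : RedArrow X r s) :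
    r ∈ X ∧ s ∈ X ∧ r.1 < s.1 ∧ s.2 < r.2 ∧ ∀ u ∈ X, ∀ v ∈ X, u.1 < v.1 → v.2 < u.2 →
      lineThrough X u v = lineThrough X r s →
      (s.1 ≤ v.1 ∧ v.2 ≤ s.2) ∧ (s = v → leD u r) := by
  obtain ⟨hr, hs, hd, ⟨⟨h1, h2⟩, -⟩, hm⟩ := h
  have h1' : r.1 < s.1 := lt_of_le_of_ne h1 (by intro e; simp [DecPair, e] at hd)
  have h2' : s.2 < r.2 := lt_of_le_of_ne h2 (by intro e; simp [DecPair, e] at hd)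
  refine ⟨hr, hs, h1', h2', fun u hu v hv k1 k2 e => ?_⟩
  rcases hm u v hu hv (mul_neg_of_pos_of_neg (by linarith) (by linarith))
    ⟨⟨k1.le, k2.le⟩, by rintro rfl; exact lt_irrefl _ k1⟩ e with h | ⟨rfl, h⟩
  · exact ⟨h.1, fun e => absurd e h.2⟩
  · exact ⟨⟨le_rfl, le_rfl⟩, fun _ => h⟩

/-- Under the Assumptions with `d₁ = d₂`, the red arrow `(r,s)` for the line
`⟨a,d₁⟩` is placed according to option (c) or (d), and the open axis-parallel
segments between `a` and `r` and between `a` and `s` contain no point of `X`. -/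
theorem arrow_placement_one_d (X : Finset (ℝ × ℝ)) (a d₁ d₂ r s : ℝ × ℝ)
    (hnc : NonCollinear X) (haX : a ∈ X) (hiso : NotEndpoint X a)
    (hQ2 : ∀ z ∈ X, ¬(z.1 < a.1 ∧ a.2 < z.2))
    (hQ4 : ∃ z ∈ X, a.1 < z.1 ∧ z.2 < a.2)
    (hd1X : d₁ ∈ X) (hd1 : a.1 < d₁.1 ∧ d₁.2 < a.2)
    (hd1strip : ∀ z ∈ X, ¬(a.1 < z.1 ∧ d₁.2 < z.2 ∧ z.2 < a.2))
    (hd1seg : ∀ z ∈ X, ¬(a.1 < z.1 ∧ z.1 < d₁.1 ∧ z.2 = d₁.2))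
    (hd2X : d₂ ∈ X) (hd2 : a.1 < d₂.1 ∧ d₂.2 < a.2)
    (hd2strip : ∀ z ∈ X, ¬(a.1 < z.1 ∧ z.1 < d₂.1 ∧ z.2 < a.2))
    (hd2seg : ∀ z ∈ X, ¬(z.1 = d₂.1 ∧ d₂.2 < z.2 ∧ z.2 < a.2))
    (hdd : d₁ = d₂)
    (hrs : RedArrow X r s) (hline : lineThrough X r s = lineThrough X a d₁) :
    (PlacementC a d₁ r s ∨ PlacementD a d₁ r s) ∧
    (∀ z ∈ X, z ∉ OpenSeg a r) ∧ (∀ z ∈ X, z ∉ OpenSeg a s) := by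
  subst hdd
  obtain ⟨hr, hs, hrs1, hrs2, hmin⟩ := red_spec hrs
  have har : a ≠ r := (hiso r s (Or.inr hrs)).1
  have has : a ≠ s := (hiso r s (Or.inr hrs)).2
  obtain ⟨ha1, ha2⟩ := hd1
  have hL : ∀ z ∈ X, ((z.1 ≤ r.1 ∧ r.2 ≤ z.2) ∨
      (r.1 ≤ z.1 ∧ z.2 ≤ r.2 ∧ z.1 ≤ s.1 ∧ s.2 ≤ z.2) ∨ (s.1 ≤ z.1 ∧ z.2 ≤ s.2)) ↔
      ((z.1 ≤ a.1 ∧ a.2 ≤ z.2) ∨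
      (a.1 ≤ z.1 ∧ z.2 ≤ a.2 ∧ z.1 ≤ d₁.1 ∧ d₁.2 ≤ z.2) ∨ (d₁.1 ≤ z.1 ∧ z.2 ≤ d₁.2)) := by
    intro z hz
    have h1 := mem_line_dec X r s z hrs1 hrs2
    have h2 := mem_line_dec X a d₁ z ha1 ha2
    rw [hline] at h1
    have h3 := h1.symm.trans h2
    simpa only [hz, true_and] using h3
  have hLr := (hL r hr).1 (Or.inl ⟨le_rfl, le_rfl⟩)
  have hLs := (hL s hs).1 (Or.inr (Or.inr ⟨le_rfl, le_rfl⟩))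
  obtain ⟨⟨hsd1, hsd2⟩, hsd⟩ := hmin a haX d₁ hd1X ha1 ha2 hline.symm
  have hQ2r := hQ2 r hr
  have hQ2s := hQ2 s hs
  have hsa := hd1strip s hs
  have hsb := hd1seg s hs
  have hsc := hd2strip s hs
  have hse := hd2seg s hs
  have hra := hd1strip r hr
  have hrb := hd1seg r hr
  have hrc := hd2strip r hr
  have hre := hd2seg r hr
  have har' : ¬ (a.1 = r.1 ∧ a.2 = r.2) := fun h => har (Prod.ext h.1 h.2)
  have has' : ¬ (a.1 = s.1 ∧ a.2 = s.2) := fun h => has (Prod.ext h.1 h.2)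
  have hne : s ≠ d₁ := by
    intro e
    have hra' := hsd e
    obtain ⟨k1, k2⟩ := hra'
    subst e
    have hAB : (a.1 < r.1 ∧ r.2 = a.2) ∨ (r.1 = a.1 ∧ r.2 < a.2) := by grind
    rcases hAB with ⟨h1, h2⟩ | ⟨h1, h2⟩
    · refine hnc a haX r hr har (line_eq_hor X a r h1 h2.symm fun z hz z1 z2 => ?_)
      have := hL z hz
      have := hd2strip z hz
      grind
    · refine hnc a haX r hr har (line_eq_ver X a r h2 h1.symm fun z hz z1 z2 => ?_)
      have := hL z hz
      have := hd1strip z hz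
      have := hQ2 z hz
      grind
  have hne' : ¬ (s.1 = d₁.1 ∧ s.2 = d₁.2) := fun h => hne (Prod.ext h.1 h.2)
  have hCD : PlacementC a d₁ r s ∨ PlacementD a d₁ r s := by
    unfold PlacementC PlacementD
    grind
  have seg_r : ∀ z ∈ X, r.1 < s.1 → z.1 < s.1 → s.2 < z.2 → ¬ leD z r →
      ¬ (∀ w ∈ X, ((w.1 ≤ z.1 ∧ z.2 ≤ w.2) ∨
      (z.1 ≤ w.1 ∧ w.2 ≤ z.2 ∧ w.1 ≤ s.1 ∧ s.2 ≤ w.2) ∨ (s.1 ≤ w.1 ∧ w.2 ≤ s.2)) ↔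
      ((w.1 ≤ r.1 ∧ r.2 ≤ w.2) ∨
      (r.1 ≤ w.1 ∧ w.2 ≤ r.2 ∧ w.1 ≤ s.1 ∧ s.2 ≤ w.2) ∨ (s.1 ≤ w.1 ∧ w.2 ≤ s.2))) := by
    intro z hz _ k1 k2 k3 h
    refine k3 ((hmin z hz s hs k1 k2 ?_).2 rfl)
    ext w
    rw [mem_line_dec X z s w k1 k2, mem_line_dec X r s w hrs1 hrs2]
    exact and_congr_right fun hw => h w hw
  have seg_s : ∀ z ∈ X, r.1 < z.1 → z.2 < r.2 → ¬ leD s z →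
      ¬ (∀ w ∈ X, ((w.1 ≤ r.1 ∧ r.2 ≤ w.2) ∨
      (r.1 ≤ w.1 ∧ w.2 ≤ r.2 ∧ w.1 ≤ z.1 ∧ z.2 ≤ w.2) ∨ (z.1 ≤ w.1 ∧ w.2 ≤ z.2)) ↔
      ((w.1 ≤ r.1 ∧ r.2 ≤ w.2) ∨
      (r.1 ≤ w.1 ∧ w.2 ≤ r.2 ∧ w.1 ≤ s.1 ∧ s.2 ≤ w.2) ∨ (s.1 ≤ w.1 ∧ w.2 ≤ s.2))) := by
    intro z hz k1 k2 k3 h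
    refine k3 (hmin r hr z hz k1 k2 ?_).1
    ext w
    rw [mem_line_dec X r z w k1 k2, mem_line_dec X r s w hrs1 hrs2]
    exact and_congr_right fun hw => h w hw
  refine ⟨hCD, ?_, ?_⟩
  · intro z hz hseg
    clear hsd hmin hiso hQ4 hrs hline hnc hLr hLs hQ2r hQ2s hsa hsb hsc hse hra hrb hrc hre har' has' hne' seg_s
    rcases hCD with ⟨⟨c1, c2⟩, c3, c4, c5⟩ | ⟨⟨c1, c2⟩, c3, c4, c5⟩
    · have hz' : z.1 = a.1 ∧ a.2 < z.2 ∧ z.2 < r.2 := by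
        rcases hseg with ⟨e1, e2, e3, e4⟩ | ⟨e1, e2, e3, e4⟩
        · rw [min_eq_left c2.le] at e3; rw [max_eq_right c2.le] at e4; exact ⟨e1, e3, e4⟩
        · linarith
      refine seg_r z hz hrs1 (by linarith) (by linarith) (fun h => by have := h.2; linarith) ?_
      intro w hw
      have := hL w hw
      have := hQ2 w hw
      clear seg_r hL hQ2 hd1strip hd1seg hd2strip hd2seg hseg
      grind
    · have hz' : z.2 = a.2 ∧ r.1 < z.1 ∧ z.1 < a.1 := by
        rcases hseg with ⟨e1, e2, e3, e4⟩ | ⟨e1, e2, e3, e4⟩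
        · linarith
        · rw [min_eq_right c2.le] at e3; rw [max_eq_left c2.le] at e4; exact ⟨e1, e3, e4⟩
      refine seg_r z hz hrs1 (by linarith) (by linarith) (fun h => by have := h.1; linarith) ?_
      intro w hw
      have := hL w hw
      have := hQ2 w hw
      clear seg_r hL hQ2 hd1strip hd1seg hd2strip hd2seg hseg
      grind
  · intro z hz hseg
    clear hsd hmin hiso hQ4 hrs hline hnc hLr hLs hQ2r hQ2s hsa hsb hsc hse hra hrb hrc hre har' has' hne' seg_r
    rcases hCD with ⟨⟨c1, c2⟩, c3, c4, c5⟩ | ⟨⟨c1, c2⟩, c3, c4, c5⟩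
    · have hz' : z.2 = a.2 ∧ a.1 < z.1 ∧ z.1 < s.1 := by
        rcases hseg with ⟨e1, e2, e3, e4⟩ | ⟨e1, e2, e3, e4⟩
        · linarith
        · rw [min_eq_left c3.le] at e3; rw [max_eq_right c3.le] at e4; exact ⟨e1, e3, e4⟩
      refine seg_s z hz (by linarith) (by linarith) (fun h => by have := h.1; linarith) ?_
      intro w hw
      have := hL w hw
      have := hQ2 w hw
      have := hd1strip w hw
      have := hd2strip w hw
      clear seg_s hL hQ2 hd1strip hd1seg hd2strip hd2seg hseg
      grind
    · have hz' : z.1 = a.1 ∧ s.2 < z.2 ∧ z.2 < a.2 := by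
        rcases hseg with ⟨e1, e2, e3, e4⟩ | ⟨e1, e2, e3, e4⟩
        · rw [min_eq_right c5.le] at e3; rw [max_eq_left c5.le] at e4; exact ⟨e1, e3, e4⟩
        · linarith
      refine seg_s z hz (by linarith) (by linarith) (fun h => by have := h.2; linarith) ?_
      intro w hw
      have := hL w hw
      have := hQ2 w hw
      have := hd1strip w hw
      have := hd2strip w hw
      clear seg_s hL hQ2 hd1strip hd1seg hd2strip hd2seg hseg
      grind
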